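/- arXiv:2503.03423 — 3 statements merged into one kernel-verified Lean document; each statement's English description precedes it below -/
import Mathlib

section
/- Let L be a finite group and let A be a normal subgroup of L of odd order. Then the number of conjugacy classes of L consisting of involutions is equal to the number of conjugacy classes of the quotient group L/A consisting of involutions. -/
/-!
Write `f` for the projection `L → L/A`. If two involutions of `L` have conjugate images, then after
conjugating one of them their product lies in the kernel, so it has odd order, and two involutions
whose product has odd order are conjugate (in the dihedral group they generate). Conversely, if
`f x` is an involution then `x ^ 2` has some odd order `k`, and `x ^ k` is an involution with the
same image as `x`. Both steps work for any surjective homomorphism all of whose kernel elements have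
odd order.
-/

section OddKernel

variable {G H : Type*} [Group G] [Group H]

/-- The set of conjugacy classes of a group that consist of involutions, i.e. the classes counted on
either side of the theorem. -/
def involutionClasses (G : Type*) [Group G] : Set (ConjClasses G) :=
  {c | ∀ x ∈ c.carrier, orderOf x = 2}

theorem orderOf_eq_of_isConj {x y : G} (h : IsConj x y) : orderOf x = orderOf y := by
  obtain ⟨g, hg⟩ := h
  exact hg.orderOf_eq

theorem mk_mem_involutionClasses {x : G} :
    ConjClasses.mk x ∈ involutionClasses G ↔ orderOf x = 2 := by
  refine ⟨fun h ↦ h x ConjClasses.mem_carrier_mk, fun hx y hy ↦ ?_⟩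
  rw [ConjClasses.mem_carrier_iff_mk_eq, ConjClasses.mk_eq_mk_iff_isConj] at hy
  rw [orderOf_eq_of_isConj hy, hx]

theorem isConj_of_odd_orderOf_mul {x y : G} (hx : x ^ 2 = 1) (hy : y ^ 2 = 1)
    (hxy : Odd (orderOf (x * y))) : IsConj x y := by
  obtain ⟨m, hm⟩ := hxy
  have hx_inv : x⁻¹ = x := inv_eq_of_mul_eq_one_left (by rw [← sq, hx])
  have hy_inv : y⁻¹ = y := inv_eq_of_mul_eq_one_left (by rw [← sq, hy])
  have inverts : SemiconjBy x (x * y)⁻¹ (x * y) := by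
    rw [SemiconjBy, mul_inv_rev, hx_inv, hy_inv, mul_assoc]
  have pow_inv : ((x * y) ^ m)⁻¹ = (x * y) ^ (m + 1) := by
    apply inv_eq_of_mul_eq_one_right
    rw [← pow_add, ← add_assoc, ← two_mul, ← hm, pow_orderOf_eq_one]
  refine isConj_iff.2 ⟨(x * y) ^ m, mul_inv_eq_iff_eq_mul.2 ?_⟩
  calc (x * y) ^ m * x = x * ((x * y)⁻¹) ^ m := (inverts.pow_right m).eq.symm
    _ = x * (x * y) ^ (m + 1) := by rw [inv_pow, pow_inv]
    _ = x ^ 2 * y * (x * y) ^ m := by simp only [pow_succ' (x * y), sq, mul_assoc]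
    _ = y * (x * y) ^ m := by rw [hx, one_mul]

theorem orderOf_map_eq_of_coprime (f : G →* H) {x : G}
    (hf : ∀ a ∈ f.ker, (orderOf a).Coprime (orderOf x)) : orderOf (f x) = orderOf x := by
  refine dvd_antisymm (orderOf_map_dvd f x) (orderOf_dvd_of_pow_eq_one ?_)
  have mem_ker : x ^ orderOf (f x) ∈ f.ker := by
    rw [MonoidHom.mem_ker, map_pow, pow_orderOf_eq_one]
  exact orderOf_eq_one_iff.1 ((hf _ mem_ker).eq_one_of_dvd (orderOf_pow_dvd _))

theorem exists_orderOf_eq_map_eq_of_coprime (f : G →* H) {x : G}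
    (hx : (orderOf (x ^ orderOf (f x))).Coprime (orderOf (f x))) :
    ∃ y, orderOf y = orderOf (f x) ∧ f y = f x := by
  obtain ⟨k, hk_zero, hk_one⟩ := Nat.chineseRemainder hx 0 1
  have map_eq : f (x ^ k) = f x := by
    rw [map_pow, pow_eq_pow_iff_modEq.2 hk_one, pow_one]
  refine ⟨x ^ k, dvd_antisymm (orderOf_dvd_of_pow_eq_one ?_) ?_, map_eq⟩
  · rw [pow_right_comm, pow_eq_pow_iff_modEq.2 hk_zero, pow_zero]
  · simpa only [map_eq] using orderOf_map_dvd f (x ^ k)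

theorem isConj_of_isConj_map {f : G →* H} (hf : Function.Surjective f)
    (hker : ∀ a ∈ f.ker, Odd (orderOf a)) {x y : G} (hx : x ^ 2 = 1) (hy : y ^ 2 = 1)
    (hfxy : IsConj (f x) (f y)) : IsConj x y := by
  obtain ⟨b, map_conj⟩ := isConj_iff.1 hfxy
  obtain ⟨g, rfl⟩ := hf b
  have conj_sq : (g * x * g⁻¹) ^ 2 = 1 := by rw [conj_pow, hx, mul_one, mul_inv_cancel]
  have mul_mem_ker : g * x * g⁻¹ * y ∈ f.ker := by
    rw [MonoidHom.mem_ker, map_mul, map_mul, map_mul, map_inv, map_conj, ← sq, ← map_pow, hy,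
      map_one]
  exact (isConj_iff.2 ⟨g, rfl⟩).trans (isConj_of_odd_orderOf_mul conj_sq hy (hker _ mul_mem_ker))

theorem stmt0_general {f : G →* H} (hf : Function.Surjective f)
    (hker : ∀ a ∈ f.ker, Odd (orderOf a)) :
    Set.BijOn (ConjClasses.map f) (involutionClasses G) (involutionClasses H) := by
  refine ⟨fun c hc ↦ ?mapsTo, fun c hc d hd hcd ↦ ?injOn, fun c hc ↦ ?surjOn⟩
  case mapsTo =>
    obtain ⟨x, rfl⟩ := ConjClasses.exists_rep c
    rw [mk_mem_involutionClasses] at hc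
    refine mk_mem_involutionClasses.2 ((orderOf_map_eq_of_coprime f fun a ha ↦ ?_).trans hc)
    rw [hc]
    exact (hker a ha).coprime_two_right
  case injOn =>
    obtain ⟨x, rfl⟩ := ConjClasses.exists_rep c
    obtain ⟨y, rfl⟩ := ConjClasses.exists_rep d
    rw [mk_mem_involutionClasses, orderOf_eq_prime_iff] at hc hd
    exact ConjClasses.mk_eq_mk_iff_isConj.2 <|
      isConj_of_isConj_map hf hker hc.1 hd.1 (ConjClasses.mk_eq_mk_iff_isConj.1 hcd)
  case surjOn =>
    obtain ⟨z, rfl⟩ := ConjClasses.exists_rep c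
    obtain ⟨x, rfl⟩ := hf z
    rw [mk_mem_involutionClasses] at hc
    have sq_mem_ker : x ^ 2 ∈ f.ker := by
      rw [MonoidHom.mem_ker, map_pow, ← hc, pow_orderOf_eq_one]
    obtain ⟨y, hy, map_eq⟩ := exists_orderOf_eq_map_eq_of_coprime f (x := x) <| by
      rw [hc]
      exact (hker _ sq_mem_ker).coprime_two_right
    exact ⟨ConjClasses.mk y, mk_mem_involutionClasses.2 (hy.trans hc),
      congrArg ConjClasses.mk map_eq⟩

end OddKernel

/-- Let `L` be a finite group and `A` a normal subgroup of odd order. Then `L` and `L/A`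
have the same number of conjugacy classes consisting of involutions. -/
theorem stmt0 {L : Type*} [Group L] [Finite L] (A : Subgroup L) [A.Normal]
    (hA : Odd (Nat.card A)) :
    Nat.card {c : ConjClasses L // ∀ x ∈ c.carrier, orderOf x = 2} =
      Nat.card {c : ConjClasses (L ⧸ A) // ∀ x ∈ c.carrier, orderOf x = 2} :=
  Nat.card_congr <| (stmt0_general (QuotientGroup.mk'_surjective A) fun _ ha ↦
    hA.of_dvd_nat (A.orderOf_dvd_natCard (by rwa [QuotientGroup.ker_mk'] at ha))).equiv _
end

section
/- Let L be a finite group, let A be a normal subgroup of L of odd order, and let t, t' ∈ L be elements of order 2 with t⁻¹t' ∈ A (i.e., t and t' lie in the same coset of A). Then t and t' are conjugate in L. -/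
/-!
If `t ^ 2 = t' ^ 2`, then `t` inverts `a = t⁻¹ * t'` under conjugation, and hence every power `b`
of `a`; so `b⁻¹ * t * b = t * b ^ 2`. When `a` has odd order it is the square of one of its powers
`b`, and then `t * b ^ 2 = t * a = t'`.
-/

section InvertedElement

variable {G : Type*} [Group G] {t t' a b : G}

theorem semiconjBy_inv_mul_of_sq_eq_sq (hsq : t ^ 2 = t' ^ 2) :
    SemiconjBy t (t⁻¹ * t') (t⁻¹ * t')⁻¹ :=
  calc t * (t⁻¹ * t') = t'⁻¹ * t' ^ 2 := by group
    _ = t'⁻¹ * t ^ 2 := by rw [hsq]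
    _ = (t⁻¹ * t')⁻¹ * t := by rw [mul_inv_rev, inv_inv, mul_assoc, sq]

theorem inv_mul_mul_eq_mul_sq_of_semiconjBy_inv (hb : SemiconjBy t b b⁻¹) :
    b⁻¹ * t * b = t * b ^ 2 := by
  rw [← hb.eq, mul_assoc, ← sq]

theorem exists_pow_sq_eq_of_odd_orderOf (ha : Odd (orderOf a)) : ∃ m : ℕ, (a ^ m) ^ 2 = a := by
  obtain ⟨m, hm⟩ := exists_pow_eq_self_of_coprime ha.coprime_two_left
  exact ⟨m, by rw [pow_right_comm, hm]⟩

theorem exists_pow_conj_eq_mul_of_semiconjBy_inv (hta : SemiconjBy t a a⁻¹)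
    (ha : Odd (orderOf a)) : ∃ m : ℕ, (a ^ m)⁻¹ * t * a ^ m = t * a := by
  obtain ⟨m, hm⟩ := exists_pow_sq_eq_of_odd_orderOf ha
  have htb : SemiconjBy t (a ^ m) (a ^ m)⁻¹ := inv_pow a m ▸ hta.pow_right m
  exact ⟨m, by rw [inv_mul_mul_eq_mul_sq_of_semiconjBy_inv htb, hm]⟩

end InvertedElement

theorem stmt3_general {G : Type*} [Group G] {A : Subgroup G} (hA : Odd (Nat.card A)) {t t' : G}
    (hsq : t ^ 2 = t' ^ 2) (htt' : t⁻¹ * t' ∈ A) : ∃ c ∈ A, c * t * c⁻¹ = t' := by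
  have hodd : Odd (orderOf (t⁻¹ * t')) := hA.of_dvd_nat (A.orderOf_dvd_natCard htt')
  obtain ⟨m, hm⟩ :=
    exists_pow_conj_eq_mul_of_semiconjBy_inv (semiconjBy_inv_mul_of_sq_eq_sq hsq) hodd
  refine ⟨((t⁻¹ * t') ^ m)⁻¹, A.inv_mem (A.pow_mem htt' m), ?_⟩
  rw [inv_inv, hm, mul_inv_cancel_left]

/-- If `A ⊴ L` has odd order and `t, t'` are involutions of `L` lying in the same coset of
`A`, then `t` and `t'` are conjugate in `L`. -/
theorem stmt3 {L : Type*} [Group L] [Finite L] (A : Subgroup L) [A.Normal]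
    (hA : Odd (Nat.card A)) (t t' : L)
    (ht : orderOf t = 2) (ht' : orderOf t' = 2) (htt' : t⁻¹ * t' ∈ A) :
    IsConj t t' := by
  have hsq : t ^ 2 = t' ^ 2 :=
    (orderOf_eq_prime_iff.1 ht).1.trans (orderOf_eq_prime_iff.1 ht').1.symm
  obtain ⟨c, -, hc⟩ := stmt3_general hA hsq htt'
  exact isConj_iff.2 ⟨c, hc⟩
end

section
/- Let T be a finite group acting transitively on a nonempty set Ω, let ω ∈ Ω, and let H be the stabilizer of ω in T. If every element of order 2 in T fixes some point of Ω, then the number of T-conjugacy classes of T consisting of involutions is at most the number of H-conjugacy classes of H consisting of involutions. -/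
/-!
Let `S` be a set of elements of `T`, each fixing a point. By transitivity, every element of `S` is
conjugate to an element of the point stabilizer `H`. So each conjugacy class of `T` inside `S` is
the image of an `H`-class under the map `ConjClasses H → ConjClasses T` induced by inclusion, and
that `H`-class again lies in `S`.
-/

open Cardinal

section ConjClasses

variable {G H : Type*} [Monoid G] [Monoid H]

theorem mapsTo_carrier_conjClassesMap (f : H →* G) (c : ConjClasses H) :
    Set.MapsTo f c.carrier (c.map f).carrier := by
  intro h hh
  rw [ConjClasses.mem_carrier_iff_mk_eq] at hh ⊢
  rw [← hh]
  rfl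

theorem setOf_carrier_subset_subset_image_conjClassesMap (f : H →* G) {S : Set G}
    (hS : ∀ x ∈ S, ∃ h, IsConj (f h) x) :
    {c : ConjClasses G | c.carrier ⊆ S} ⊆
      ConjClasses.map f '' {c : ConjClasses H | c.carrier ⊆ f ⁻¹' S} := by
  intro c hc
  obtain ⟨x, rfl⟩ := ConjClasses.exists_rep c
  obtain ⟨h, hhx⟩ := hS x (hc ConjClasses.mem_carrier_mk)
  have map_mk : (ConjClasses.mk h).map f = ConjClasses.mk x :=
    ConjClasses.mk_eq_mk_iff_isConj.2 hhx
  refine ⟨ConjClasses.mk h, fun k hk => hc ?_, map_mk⟩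
  rw [← map_mk]
  exact mapsTo_carrier_conjClassesMap f _ hk

end ConjClasses

section MulAction

variable {T Ω : Type*} [Group T] [MulAction T Ω]

theorem exists_stabilizer_isConj_of_smul_eq {ω α : Ω} (hα : α ∈ MulAction.orbit T ω) {x : T}
    (hx : x • α = α) : ∃ h : MulAction.stabilizer T ω, IsConj (h : T) x := by
  obtain ⟨g, rfl⟩ := hα
  have hx_mem : x ∈ (MulAction.stabilizer T ω).map (MulAut.conj g).toMonoidHom := by
    rwa [← MulAction.stabilizer_smul_eq_stabilizer_map_conj, MulAction.mem_stabilizer_iff]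
  obtain ⟨h, hh, hgh⟩ := hx_mem
  exact ⟨⟨h, hh⟩, isConj_iff.2 ⟨g, hgh⟩⟩

theorem stmt8_general [MulAction.IsPretransitive T Ω] (ω : Ω) {S : Set T}
    (hfix : ∀ x ∈ S, ∃ α : Ω, x • α = α) :
    #{c : ConjClasses T // ∀ x ∈ c.carrier, x ∈ S} ≤
      #{c : ConjClasses (MulAction.stabilizer T ω) // ∀ x ∈ c.carrier, (x : T) ∈ S} := by
  have hconj : ∀ x ∈ S, ∃ h : MulAction.stabilizer T ω, IsConj (h : T) x := fun x hx =>
    let ⟨_, hα⟩ := hfix x hx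
    exists_stabilizer_isConj_of_smul_eq (MulAction.exists_smul_eq T ω _) hα
  exact (mk_le_mk_of_subset (setOf_carrier_subset_subset_image_conjClassesMap
    (MulAction.stabilizer T ω).subtype hconj)).trans mk_image_le

end MulAction

/-- If a finite group `T` acts transitively on a nonempty set `Ω` with point stabilizer
`H`, and every involution of `T` fixes a point, then the number of conjugacy classes of
involutions of `T` is at most the number of conjugacy classes of involutions of `H`. -/
theorem stmt8 {T Ω : Type*} [Group T] [Finite T] [Nonempty Ω]
    [MulAction T Ω] [MulAction.IsPretransitive T Ω] (ω : Ω)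
    (hfix : ∀ x : T, orderOf x = 2 → ∃ α : Ω, x • α = α) :
    Nat.card {c : ConjClasses T // ∀ x ∈ c.carrier, orderOf x = 2} ≤
      Nat.card {c : ConjClasses (MulAction.stabilizer T ω) //
        ∀ x ∈ c.carrier, orderOf x = 2} := by
  have : Finite (ConjClasses (MulAction.stabilizer T ω)) := Quotient.finite _
  simpa only [Nat.card, Set.mem_ofPred_eq, Subgroup.orderOf_coe] using
    toNat_le_toNat (stmt8_general ω (S := {x | orderOf x = 2}) hfix) mk_lt_aleph0
end
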